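/- Any finite subset {x₁,…,xₘ} of real hyperbolic space H^n_ℝ, equipped with the metric √d (square root of geodesic distance), embeds isometrically into a Euclidean sphere in ℝ^p for some p. -/

import Mathlib

open Finset

/-- The inverse hyperbolic cosine on `[1, ∞)`. -/
noncomputable def arcosh (x : ℝ) : ℝ := Real.log (x + Real.sqrt (x ^ 2 - 1))

/-- The Lorentzian form `⟨x,y⟩ = -x⁰y⁰ + x¹y¹ + … + xⁿyⁿ` on `ℝ^{n+1}`. -/
def lorentzForm {n : ℕ} (x y : Fin (n + 1) → ℝ) : ℝ :=
  -(x 0 * y 0) + ∑ i : Fin n, x i.succ * y i.succ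

/-- The geodesic distance on real hyperbolic space `H^n_ℝ`, in terms of negative
representative vectors: `cosh d(x,y) = |⟨x,y⟩| / (⟨x,x⟩⟨y,y⟩)^{1/2}`. -/
noncomputable def hypDist {n : ℕ} (x y : Fin (n + 1) → ℝ) : ℝ :=
  arcosh (|lorentzForm x y| / Real.sqrt (lorentzForm x x * lorentzForm y y))

/-!
In the Klein model put `w x = 1 - ‖x‖²` and `Z x y = w x * w y / (1 - ⟪x, y⟫)² = 1 / cosh² d(x, y)`.
Then `-d(x, y) = log (w x) / 2 + log (w y) / 2 - log 2 + N x y`, where the kernel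
`N x y = -log (1 - ⟪x, y⟫) - log ((1 + √(1 - Z x y)) / 2)` is positive semidefinite, both summands
being power series with nonnegative coefficients in positive semidefinite kernels. As a Hadamard
product with the square of `1 / (1 - ⟪x, y⟫)`, the kernel `Z` dominates the rank one kernel
`w x * w y` in the Loewner order. Hence `N` dominates a positive multiple of each Hadamard power of
the latter, and every power `w ^ (k + 1)` lies in the range of `N` on a finite set. By interpolation
so does `-log w / 2 = N b`, and for `C = bᵀ N b` the matrix with entries
`C + log (w x) / 2 + log (w y) / 2 + N x y` is `(1 - b eᵀ)ᵀ N (1 - b eᵀ)`, with `e` the all-ones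
vector. So `C + log 2 - d` is positive semidefinite: it is twice the Gram matrix of the required
points, which lie on a sphere centred at the origin.
-/

namespace HyperbolicEmbedding

open Matrix Filter Topology
open scoped MatrixOrder ComplexOrder RealInnerProductSpace

section EntrywisePowers

variable {ι 𝕜 : Type*} [RCLike 𝕜] {A B C : Matrix ι ι 𝕜}

lemma map_pow_succ_eq_hadamard (A : Matrix ι ι 𝕜) (k : ℕ) :
    A.map (· ^ (k + 1)) = A ⊙ A.map (· ^ k) := by
  ext i j
  exact pow_succ' (A i j) k

lemma hadamard_le_hadamard_left (hA : 0 ≤ A) (hBC : B ≤ C) : A ⊙ B ≤ A ⊙ C := by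
  have hsub : A ⊙ C - A ⊙ B = A ⊙ (C - B) := by
    ext i j
    exact (mul_sub _ _ _).symm
  rw [le_iff, hsub]
  exact hA.posSemidef.hadamard (le_iff.mp hBC)

lemma map_pow_nonneg [Finite ι] (hA : 0 ≤ A) (k : ℕ) : 0 ≤ A.map (· ^ k) := by
  induction k with
  | zero =>
    convert (posSemidef_gram 𝕜 fun _ : ι => (1 : 𝕜)).nonneg using 1
    ext i j
    simp only [map_apply, pow_zero, gram_apply, inner_self_eq_norm_sq_to_K, norm_one, map_one,
      one_pow]
  | succ k ih =>
    rw [map_pow_succ_eq_hadamard]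
    exact (hA.posSemidef.hadamard ih.posSemidef).nonneg

lemma map_pow_le_map_pow [Finite ι] (hA : 0 ≤ A) (hAB : A ≤ B) (k : ℕ) :
    A.map (· ^ k) ≤ B.map (· ^ k) := by
  induction k with
  | zero =>
    simp only [pow_zero]
    exact le_rfl
  | succ k ih =>
    rw [map_pow_succ_eq_hadamard, map_pow_succ_eq_hadamard]
    calc A ⊙ A.map (· ^ k) ≤ A ⊙ B.map (· ^ k) := hadamard_le_hadamard_left hA ih
      _ = B.map (· ^ k) ⊙ A := hadamard_comm _ _
      _ ≤ B.map (· ^ k) ⊙ B :=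
        hadamard_le_hadamard_left (map_pow_nonneg (hA.trans hAB) k) hAB
      _ = B ⊙ B.map (· ^ k) := hadamard_comm _ _

lemma isClosed_setOf_posSemidef : IsClosed {A : Matrix ι ι 𝕜 | A.PosSemidef} := by
  simp only [PosSemidef, IsHermitian, Set.ofPred_and, Set.ofPred_forall, Finsupp.sum]
  refine .inter (isClosed_eq (by fun_prop) continuous_id) (isClosed_iInter fun t => ?_)
  exact isClosed_le continuous_const (by fun_prop)

instance matrixOrderClosedTopology : OrderClosedTopology (Matrix ι ι 𝕜) where
  isClosed_le' := isClosed_setOf_posSemidef.preimage (continuous_snd.sub continuous_fst)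

instance matrixPosSMulMono : PosSMulMono ℝ (Matrix ι ι 𝕜) where
  smul_le_smul_of_nonneg_left c hc A B hAB := by
    rw [le_iff, ← smul_sub]
    exact (le_iff.mp hAB).smul hc

end EntrywisePowers

section EntrywiseFunctions

variable {ι : Type*} [Finite ι] {A : Matrix ι ι ℝ}

lemma map_one_le_map_inv_one_sub (hA : 0 ≤ A) (hA1 : ∀ i j, |A i j| < 1) :
    A.map 1 ≤ A.map fun x => (1 - x)⁻¹ := by
  have hsum : HasSum (fun n : ℕ => A.map (· ^ n)) (A.map fun x => (1 - x)⁻¹) :=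
    Pi.hasSum.mpr fun i => Pi.hasSum.mpr fun j => hasSum_geometric_of_abs_lt_one (hA1 i j)
  convert le_hasSum hsum 0 fun n _ => map_pow_nonneg hA n using 2
  ext x
  simp

lemma smul_map_pow_le_map_neg_log_one_sub (hA : 0 ≤ A) (hA1 : ∀ i j, |A i j| < 1) (k : ℕ) :
    (k + 1 : ℝ)⁻¹ • A.map (· ^ (k + 1)) ≤ A.map fun x => -Real.log (1 - x) := by
  have hsum : HasSum (fun n : ℕ => (n + 1 : ℝ)⁻¹ • A.map (· ^ (n + 1)))
      (A.map fun x => -Real.log (1 - x)) := by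
    refine Pi.hasSum.mpr fun i => Pi.hasSum.mpr fun j => ?_
    convert! Real.hasSum_pow_div_log_of_abs_lt_one (hA1 i j) using 2 with n
    exact (div_eq_inv_mul _ _).symm
  exact le_hasSum hsum k fun n _ => smul_nonneg (by positivity) (map_pow_nonneg hA _)

lemma map_neg_log_one_sub_nonneg (hA : 0 ≤ A) (hA1 : ∀ i j, |A i j| < 1) :
    0 ≤ A.map fun x => -Real.log (1 - x) :=
  (smul_nonneg (by positivity) (map_pow_nonneg hA _)).trans
    (smul_map_pow_le_map_neg_log_one_sub hA hA1 0)

lemma tendsto_iterate_one_sub_sqrt {x : ℝ} (hx0 : 0 ≤ x) (hx1 : x ≤ 1) :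
    Tendsto (fun n => (fun y => (x + y ^ 2) / 2)^[n] 0) atTop (𝓝 (1 - √(1 - x))) := by
  set φ : ℝ → ℝ := fun y => (x + y ^ 2) / 2
  have hmem (n : ℕ) : φ^[n] 0 ∈ Set.Icc 0 1 := by
    induction n with
    | zero => simp
    | succ n ih =>
      rw [Function.iterate_succ_apply']
      exact ⟨by positivity, by simp only [φ]; nlinarith [ih.1, ih.2]⟩
  have hmono : Monotone fun n => φ^[n] 0 := by
    refine monotone_nat_of_le_succ fun n => ?_
    induction n with
    | zero => exact (hmem 1).1
    | succ n ih =>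
      rw [Function.iterate_succ_apply', Function.iterate_succ_apply' φ (n + 1)]
      have := (hmem n).1
      simp only [φ] at *
      gcongr
  obtain ⟨l, hl⟩ : ∃ l, Tendsto (fun n => φ^[n] 0) atTop (𝓝 l) :=
    ⟨_, tendsto_atTop_ciSup hmono ⟨1, Set.forall_mem_range.mpr fun n => (hmem n).2⟩⟩
  have hfix : (x + l ^ 2) / 2 = l :=
    isFixedPt_of_tendsto_iterate hl (by fun_prop)
  have hl1 : l ≤ 1 := le_of_tendsto' hl fun n => (hmem n).2
  have hsqrt : √(1 - x) = 1 - l := by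
    rw [show 1 - x = (1 - l) ^ 2 by linear_combination -2 * hfix, Real.sqrt_sq (by linarith)]
  rwa [hsqrt, sub_sub_cancel]

lemma map_one_sub_sqrt_one_sub_nonneg (hA : 0 ≤ A) (hA01 : ∀ i j, A i j ∈ Set.Icc 0 1) :
    0 ≤ A.map fun x => 1 - √(1 - x) := by
  have hlim : Tendsto (fun n => A.map fun x => (fun y => (x + y ^ 2) / 2)^[n] 0) atTop
      (𝓝 (A.map fun x => 1 - √(1 - x))) :=
    tendsto_pi_nhds.mpr fun i => tendsto_pi_nhds.mpr fun j =>
      tendsto_iterate_one_sub_sqrt (hA01 i j).1 (hA01 i j).2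
  -- The iterates are polynomials in `x` with nonnegative coefficients.
  refine ge_of_tendsto' hlim fun n => ?_
  induction n with
  | zero => exact le_rfl
  | succ n ih =>
    convert smul_nonneg (by norm_num : (0 : ℝ) ≤ 1 / 2) (add_nonneg hA (map_pow_nonneg ih 2))
      using 1
    ext i j
    simp only [map_apply, Function.iterate_succ_apply', Matrix.smul_apply, Matrix.add_apply,
      smul_eq_mul]
    ring

lemma half_smul_le_map_one_sub_sqrt_one_sub (hA : 0 ≤ A) (hA01 : ∀ i j, A i j ∈ Set.Icc 0 1) :
    (1 / 2 : ℝ) • A ≤ A.map fun x => 1 - √(1 - x) := by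
  have hsq : (A.map fun x => 1 - √(1 - x)) =
      (1 / 2 : ℝ) • A + (1 / 2 : ℝ) • (A.map fun x => 1 - √(1 - x)).map (· ^ 2) := by
    ext i j
    have := Real.sq_sqrt (sub_nonneg.mpr (hA01 i j).2)
    simp only [map_apply, Matrix.smul_apply, Matrix.add_apply, smul_eq_mul]
    linear_combination (-1 / 2) * this
  rw [hsq]
  exact le_add_of_nonneg_right <| smul_nonneg (by norm_num) <|
    map_pow_nonneg (map_one_sub_sqrt_one_sub_nonneg hA hA01) 2

lemma smul_map_pow_le_map_neg_log_half_one_add_sqrt (hA : 0 ≤ A)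
    (hA01 : ∀ i j, A i j ∈ Set.Icc 0 1) (k : ℕ) :
    ((k + 1 : ℝ)⁻¹ * (1 / 4) ^ (k + 1)) • A.map (· ^ (k + 1)) ≤
      A.map fun x => -Real.log ((1 + √(1 - x)) / 2) := by
  set G : Matrix ι ι ℝ := (1 / 2 : ℝ) • A.map fun x => 1 - √(1 - x) with hG
  have hAG : (1 / 4 : ℝ) • A ≤ G := by
    calc (1 / 4 : ℝ) • A = (1 / 2 : ℝ) • (1 / 2 : ℝ) • A := by rw [smul_smul]; norm_num
      _ ≤ G := smul_le_smul_of_nonneg_left (half_smul_le_map_one_sub_sqrt_one_sub hA hA01)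
        (by norm_num)
  have hA4 : 0 ≤ (1 / 4 : ℝ) • A := smul_nonneg (by norm_num) hA
  have hG1 (i j : ι) : |G i j| < 1 := by
    have hsqrt : √(1 - A i j) ≤ 1 := Real.sqrt_le_one.mpr (by linarith [(hA01 i j).1])
    have := Real.sqrt_nonneg (1 - A i j)
    simp only [hG, Matrix.smul_apply, map_apply, smul_eq_mul]
    exact abs_lt.mpr ⟨by linarith, by linarith⟩
  calc ((k + 1 : ℝ)⁻¹ * (1 / 4) ^ (k + 1)) • A.map (· ^ (k + 1))
      = (k + 1 : ℝ)⁻¹ • ((1 / 4 : ℝ) • A).map (· ^ (k + 1)) := by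
        ext i j
        simp only [Matrix.smul_apply, map_apply, smul_eq_mul, mul_pow, mul_assoc]
    _ ≤ (k + 1 : ℝ)⁻¹ • G.map (· ^ (k + 1)) :=
      smul_le_smul_of_nonneg_left (map_pow_le_map_pow hA4 hAG _) (by positivity)
    _ ≤ G.map fun x => -Real.log (1 - x) :=
      smul_map_pow_le_map_neg_log_one_sub (hA4.trans hAG) hG1 k
    _ = A.map fun x => -Real.log ((1 + √(1 - x)) / 2) := by
      ext i j
      simp only [hG, Matrix.smul_apply, map_apply, smul_eq_mul]
      ring_nf

lemma map_neg_log_half_one_add_sqrt_nonneg (hA : 0 ≤ A)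
    (hA01 : ∀ i j, A i j ∈ Set.Icc 0 1) :
    0 ≤ A.map fun x => -Real.log ((1 + √(1 - x)) / 2) :=
  (smul_nonneg (by positivity) (map_pow_nonneg hA _)).trans
    (smul_map_pow_le_map_neg_log_half_one_add_sqrt hA hA01 0)

end EntrywiseFunctions

lemma comp_mem_of_pow_succ_mem {ι K : Type*} [Finite ι] [Field K] {S : Submodule K (ι → K)}
    {w : ι → K} (hw : ∀ i, w i ≠ 0) (hS : ∀ k : ℕ, w ^ (k + 1) ∈ S) (g : K → K) : g ∘ w ∈ S := by
  classical
  have := Fintype.ofFinite ι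
  let q := Lagrange.interpolate (univ.image w) id fun x => g x / x
  have hq (i : ι) : q.eval (w i) = g (w i) / w i :=
    Lagrange.eval_interpolate_at_node (v := id) _ (Set.injOn_id _)
      (mem_image_of_mem w (mem_univ i))
  have hgw : g ∘ w = ∑ k ∈ range (q.natDegree + 1), q.coeff k • w ^ (k + 1) := by
    ext i
    rw [Function.comp_apply, ← div_mul_cancel₀ (g (w i)) (hw i), ← hq,
      Polynomial.eval_eq_sum_range, Finset.sum_mul, Finset.sum_apply]
    refine sum_congr rfl fun k _ => ?_
    rw [Pi.smul_apply, Pi.pow_apply, smul_eq_mul, pow_succ, mul_assoc]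
  rw [hgw]
  exact S.sum_mem fun k _ => S.smul_mem _ (hS k)

section PosSemidef

variable {ι : Type*} [Fintype ι]

lemma exists_gram_eq {𝕜 : Type*} [RCLike 𝕜] {A : Matrix ι ι 𝕜} (hA : A.PosSemidef) :
    ∃ f : ι → EuclideanSpace 𝕜 ι, gram 𝕜 f = A := by
  classical
  obtain ⟨B, rfl⟩ := CStarAlgebra.nonneg_iff_eq_star_mul_self.mp hA.nonneg
  refine ⟨fun i => WithLp.toLp 2 fun k => B k i, ?_⟩
  ext i j
  simp [gram_apply, star_eq_conjTranspose, mul_apply, PiLp.inner_apply, mul_comm]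

lemma mem_range_mulVecLin_of_smul_vecMulVec_le {N : Matrix ι ι ℝ} {a : ι → ℝ} {c : ℝ}
    (hc : 0 < c) (h : c • vecMulVec a a ≤ N) : a ∈ N.mulVecLin.range := by
  classical
  by_contra ha
  obtain ⟨φ, hφa, hφN⟩ := Submodule.exists_le_ker_of_notMem ha
  obtain ⟨t, rfl⟩ := (dotProductEquiv ℝ ι).surjective φ
  have htN : t ⬝ᵥ N *ᵥ t = 0 := hφN ⟨t, rfl⟩
  have hnonneg := (le_iff.mp h).dotProduct_mulVec_nonneg t
  simp only [star_trivial, sub_mulVec, dotProduct_sub, htN, smul_mulVec, vecMulVec_mulVec,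
    dotProduct_smul] at hnonneg
  have : 0 < c * (t ⬝ᵥ a) ^ 2 := mul_pos hc (sq_pos_of_ne_zero hφa)
  rw [op_smul_eq_smul, smul_eq_mul, smul_eq_mul, dotProduct_comm a t] at hnonneg
  nlinarith

lemma exists_posSemidef_const_sub_sub_add {N : Matrix ι ι ℝ} (hN : N.PosSemidef) {a : ι → ℝ}
    (ha : a ∈ N.mulVecLin.range) :
    ∃ C : ℝ, (of fun i j => C - a i - a j + N i j).PosSemidef := by
  classical
  obtain ⟨b, rfl⟩ := ha
  refine ⟨b ⬝ᵥ N *ᵥ b, ?_⟩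
  have hbN : b ᵥ* N = N *ᵥ b := by
    rw [← mulVec_transpose, ← conjTranspose_eq_transpose_of_trivial, hN.isHermitian.eq]
  convert hN.conjTranspose_mul_mul_same ((1 : Matrix ι ι ℝ) - vecMulVec b (1 : ι → ℝ)) using 1
  simp only [conjTranspose_eq_transpose_of_trivial, transpose_sub, transpose_one,
    transpose_vecMulVec, sub_mul, mul_sub, Matrix.one_mul, Matrix.mul_one, vecMulVec_mul,
    mul_vecMulVec, hbN]
  ext i j
  simp only [mulVecLin_apply, of_apply, Matrix.sub_apply, vecMulVec_apply, vecMulVec_mulVec,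
    Pi.smul_apply, Pi.one_apply, MulOpposite.smul_eq_mul_unop, MulOpposite.unop_op, one_mul,
    mul_one, dotProduct_comm b]
  ring

lemma exists_dist_eq_sqrt_of_posSemidef_const_sub {D : ι → ι → ℝ} {C : ℝ}
    (hD : ∀ i, D i i = 0) (hC : (of fun i j => C - D i j).PosSemidef) :
    ∃ f : ι → EuclideanSpace ℝ ι,
      (∀ i j, dist (f i) (f j) = √(D i j)) ∧ ∀ i, ‖f i‖ = √(C / 2) := by
  obtain ⟨f, hf⟩ := exists_gram_eq (hC.smul (by norm_num : (0 : ℝ) ≤ 1 / 2))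
  have hinner (i j : ι) : ⟪f i, f j⟫ = (C - D i j) / 2 := by
    rw [← gram_apply (𝕜 := ℝ), hf, Matrix.smul_apply, of_apply, smul_eq_mul]
    ring
  have hnorm (i : ι) : ‖f i‖ ^ 2 = C / 2 := by
    rw [← real_inner_self_eq_norm_sq, hinner, hD, sub_zero]
  refine ⟨f, fun i j => ?_, fun i => ?_⟩
  · rw [dist_eq_norm, ← Real.sqrt_sq (norm_nonneg (f i - f j)), norm_sub_sq_real, hnorm, hnorm,
      hinner]
    ring_nf
  · rw [← hnorm, Real.sqrt_sq (norm_nonneg _)]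

end PosSemidef

lemma exists_posSemidef_const_sub_comp_sub_comp_add {ι : Type*} [Finite ι]
    {N : Matrix ι ι ℝ} (hN : N.PosSemidef) {w : ι → ℝ} (hw : ∀ i, w i ≠ 0)
    (hwN : ∀ k : ℕ, ∃ c : ℝ, 0 < c ∧ c • (vecMulVec w w).map (· ^ (k + 1)) ≤ N) (g : ℝ → ℝ) :
    ∃ C : ℝ, (of fun i j => C - g (w i) - g (w j) + N i j).PosSemidef := by
  have := Fintype.ofFinite ι
  refine exists_posSemidef_const_sub_sub_add hN (a := g ∘ w) (comp_mem_of_pow_succ_mem hw ?_ g)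
  intro k
  obtain ⟨c, hc, hle⟩ := hwN k
  refine mem_range_mulVecLin_of_smul_vecMulVec_le hc (le_of_eq_of_le ?_ hle)
  congr 1
  ext i j
  exact (mul_pow _ _ _).symm

lemma arcosh_eq_log_add_log_half_one_add_sqrt {u : ℝ} (hu : 0 < u) :
    arcosh u = Real.log u + Real.log 2 + Real.log ((1 + √(1 - (u ^ 2)⁻¹)) / 2) := by
  have hsqrt : √(u ^ 2 - 1) = u * √(1 - (u ^ 2)⁻¹) := by
    rw [← Real.sqrt_sq hu.le, ← Real.sqrt_mul (sq_nonneg _), Real.sqrt_sq hu.le, mul_sub, mul_one,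
      mul_inv_cancel₀ (by positivity)]
  rw [arcosh, hsqrt, ← Real.log_mul hu.ne' two_ne_zero, ← Real.log_mul (by positivity)
    (by positivity)]
  ring_nf

lemma one_sub_norm_sq_pos {E : Type*} [SeminormedAddGroup E] {x : E} (hx : ‖x‖ < 1) :
    0 < 1 - ‖x‖ ^ 2 :=
  sub_pos.mpr (pow_lt_one₀ (norm_nonneg x) hx two_ne_zero)

section KleinModel

variable {E : Type*} [NormedAddCommGroup E] [InnerProductSpace ℝ E]

/-- The distance of hyperbolic space in the Klein (projective) model, carried by the open unit ball
of the inner product space `E`; `x` and `y` stand for the negative vectors `(1, x)` and `(1, y)`. -/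
noncomputable def kleinDist (x y : E) : ℝ :=
  arcosh ((1 - ⟪x, y⟫) / √((1 - ‖x‖ ^ 2) * (1 - ‖y‖ ^ 2)))

/-- The kernel `1 / cosh² (kleinDist x y)` on the open unit ball, through which the nonlinear part
of `kleinDist` is expressed. -/
noncomputable def kleinSechSq (x y : E) : ℝ :=
  (1 - ‖x‖ ^ 2) * (1 - ‖y‖ ^ 2) / (1 - ⟪x, y⟫) ^ 2

variable {x y : E}

lemma abs_real_inner_lt_one (hx : ‖x‖ < 1) (hy : ‖y‖ < 1) : |⟪x, y⟫| < 1 :=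
  (abs_real_inner_le_norm x y).trans_lt
    (mul_lt_one_of_nonneg_of_lt_one_left (norm_nonneg x) hx hy.le)

lemma one_sub_real_inner_pos (hx : ‖x‖ < 1) (hy : ‖y‖ < 1) : 0 < 1 - ⟪x, y⟫ :=
  sub_pos.mpr (abs_lt.mp (abs_real_inner_lt_one hx hy)).2

lemma kleinSechSq_mem_Icc (hx : ‖x‖ < 1) (hy : ‖y‖ < 1) : kleinSechSq x y ∈ Set.Icc 0 1 := by
  have hwx := one_sub_norm_sq_pos hx
  have hwy := one_sub_norm_sq_pos hy
  refine ⟨by unfold kleinSechSq; positivity, div_le_one_of_le₀ ?_ (sq_nonneg _)⟩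
  calc (1 - ‖x‖ ^ 2) * (1 - ‖y‖ ^ 2) = (1 - ‖x‖ * ‖y‖) ^ 2 - (‖x‖ - ‖y‖) ^ 2 := by ring
    _ ≤ (1 - ‖x‖ * ‖y‖) ^ 2 := sub_le_self _ (sq_nonneg _)
    _ ≤ (1 - ⟪x, y⟫) ^ 2 := by
      have : ‖x‖ * ‖y‖ < 1 := mul_lt_one_of_nonneg_of_lt_one_left (norm_nonneg x) hx hy.le
      have := real_inner_le_norm x y
      gcongr

lemma kleinDist_self (hx : ‖x‖ < 1) : kleinDist x x = 0 := by
  have hwx := one_sub_norm_sq_pos hx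
  rw [kleinDist, real_inner_self_eq_norm_sq, Real.sqrt_mul_self hwx.le, div_self hwx.ne', arcosh]
  norm_num

lemma kleinDist_eq (hx : ‖x‖ < 1) (hy : ‖y‖ < 1) :
    kleinDist x y = Real.log 2 + -(1 / 2) * Real.log (1 - ‖x‖ ^ 2)
      + -(1 / 2) * Real.log (1 - ‖y‖ ^ 2) + Real.log (1 - ⟪x, y⟫)
      + Real.log ((1 + √(1 - kleinSechSq x y)) / 2) := by
  have hwx := one_sub_norm_sq_pos hx
  have hwy := one_sub_norm_sq_pos hy
  have hxy := one_sub_real_inner_pos hx hy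
  have hsech : (((1 - ⟪x, y⟫) / √((1 - ‖x‖ ^ 2) * (1 - ‖y‖ ^ 2))) ^ 2)⁻¹ = kleinSechSq x y := by
    rw [div_pow, Real.sq_sqrt (by positivity), inv_div, kleinSechSq]
  rw [kleinDist, arcosh_eq_log_add_log_half_one_add_sqrt (by positivity), hsech,
    Real.log_div (by positivity) (by positivity), Real.log_sqrt (by positivity),
    Real.log_mul (by positivity) (by positivity)]
  ring

variable {ι : Type*} {v : ι → E}

lemma vecMulVec_le_kleinSechSq [Finite ι] (hv : ∀ i, ‖v i‖ < 1) :
    vecMulVec (fun i => 1 - ‖v i‖ ^ 2) (fun i => 1 - ‖v i‖ ^ 2) ≤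
      of fun i j => kleinSechSq (v i) (v j) := by
  set W := vecMulVec (fun i => 1 - ‖v i‖ ^ 2) (fun i => 1 - ‖v i‖ ^ 2)
  have hW : 0 ≤ W := (posSemidef_vecMulVec_self_star _).nonneg
  set R := (gram ℝ v).map fun x => (1 - x)⁻¹
  have hR : (gram ℝ v).map 1 ≤ R :=
    map_one_le_map_inv_one_sub (posSemidef_gram ℝ v).nonneg fun i j =>
      abs_real_inner_lt_one (hv i) (hv j)
  have hone : 0 ≤ (gram ℝ v).map 1 := map_pow_nonneg (posSemidef_gram ℝ v).nonneg 0
  convert hadamard_le_hadamard_left hW (map_pow_le_map_pow hone hR 2) using 1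
  · ext i j
    simp
  · ext i j
    simp [W, R, kleinSechSq, vecMulVec_apply, gram_apply, div_eq_mul_inv]

lemma exists_posSemidef_const_sub_kleinDist [Finite ι] (hv : ∀ i, ‖v i‖ < 1) :
    ∃ C : ℝ, (of fun i j => C - kleinDist (v i) (v j)).PosSemidef := by
  have := Fintype.ofFinite ι
  set w : ι → ℝ := fun i => 1 - ‖v i‖ ^ 2
  set Z : Matrix ι ι ℝ := of fun i j => kleinSechSq (v i) (v j)
  set L := (gram ℝ v).map fun x => -Real.log (1 - x)
  set M := Z.map fun x => -Real.log ((1 + √(1 - x)) / 2)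
  have hL : 0 ≤ L := map_neg_log_one_sub_nonneg (posSemidef_gram ℝ v).nonneg fun i j =>
    abs_real_inner_lt_one (hv i) (hv j)
  have hW : 0 ≤ vecMulVec w w := (posSemidef_vecMulVec_self_star w).nonneg
  have hWZ : vecMulVec w w ≤ Z := vecMulVec_le_kleinSechSq hv
  have hZ : 0 ≤ Z := hW.trans hWZ
  have hZ01 (i j : ι) : Z i j ∈ Set.Icc 0 1 := kleinSechSq_mem_Icc (hv i) (hv j)
  have hM : 0 ≤ M := map_neg_log_half_one_add_sqrt_nonneg hZ hZ01
  obtain ⟨C, hC⟩ := exists_posSemidef_const_sub_comp_sub_comp_add (add_nonneg hL hM).posSemidef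
    (fun i => (one_sub_norm_sq_pos (hv i)).ne')
    (fun k => ⟨(k + 1 : ℝ)⁻¹ * (1 / 4) ^ (k + 1), by positivity, calc
      _ ≤ ((k + 1 : ℝ)⁻¹ * (1 / 4) ^ (k + 1)) • Z.map (· ^ (k + 1)) :=
        smul_le_smul_of_nonneg_left (map_pow_le_map_pow hW hWZ _) (by positivity)
      _ ≤ M := smul_map_pow_le_map_neg_log_half_one_add_sqrt hZ hZ01 k
      _ ≤ L + M := le_add_of_nonneg_left hL⟩)
    fun t => -(1 / 2) * Real.log t
  refine ⟨C + Real.log 2, ?_⟩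
  convert hC using 1
  ext i j
  rw [of_apply, of_apply, kleinDist_eq (hv i) (hv j)]
  simp only [L, M, Z, Matrix.add_apply, map_apply, gram_apply, of_apply]
  ring

end KleinModel

section Hyperboloid

variable {n : ℕ} {x y : Fin (n + 1) → ℝ}

/-- The point of the Klein model in the open unit ball represented by a negative vector of
`ℝ^{n+1}`: the trace of the line through `x` on the affine hyperplane `x⁰ = 1`. -/
noncomputable def kleinCoord (x : Fin (n + 1) → ℝ) : EuclideanSpace ℝ (Fin n) :=
  WithLp.toLp 2 fun l => x l.succ / x 0

lemma apply_zero_ne_zero_of_lorentzForm_self_neg (hx : lorentzForm x x < 0) : x 0 ≠ 0 := by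
  intro h0
  have hsum : 0 ≤ ∑ l : Fin n, x l.succ * x l.succ := sum_nonneg fun l _ => mul_self_nonneg _
  rw [lorentzForm, h0, mul_zero, neg_zero, zero_add] at hx
  exact hx.not_ge hsum

lemma lorentzForm_eq_mul_one_sub_inner_kleinCoord (hx : x 0 ≠ 0) (hy : y 0 ≠ 0) :
    lorentzForm x y = -(x 0 * y 0) * (1 - ⟪kleinCoord x, kleinCoord y⟫) := by
  have hinner : x 0 * y 0 * ⟪kleinCoord x, kleinCoord y⟫ = ∑ l : Fin n, x l.succ * y l.succ := by
    rw [PiLp.inner_apply, Finset.mul_sum]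
    refine sum_congr rfl fun l _ => ?_
    simp only [kleinCoord, RCLike.inner_apply, conj_trivial]
    field_simp
  rw [lorentzForm, ← hinner]
  ring

lemma lorentzForm_self_eq (hx : x 0 ≠ 0) :
    lorentzForm x x = -(x 0 ^ 2) * (1 - ‖kleinCoord x‖ ^ 2) := by
  rw [lorentzForm_eq_mul_one_sub_inner_kleinCoord hx hx, real_inner_self_eq_norm_sq, sq (x 0)]

lemma norm_kleinCoord_lt_one (hx : lorentzForm x x < 0) : ‖kleinCoord x‖ < 1 := by
  have h0 := apply_zero_ne_zero_of_lorentzForm_self_neg hx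
  rw [lorentzForm_self_eq h0, neg_mul, neg_lt_zero,
    mul_pos_iff_of_pos_left (by positivity), sub_pos] at hx
  exact (sq_lt_one_iff₀ (norm_nonneg _)).mp hx

lemma hypDist_eq_kleinDist (hx : lorentzForm x x < 0) (hy : lorentzForm y y < 0) :
    hypDist x y = kleinDist (kleinCoord x) (kleinCoord y) := by
  have hx0 := apply_zero_ne_zero_of_lorentzForm_self_neg hx
  have hy0 := apply_zero_ne_zero_of_lorentzForm_self_neg hy
  have hxy := one_sub_real_inner_pos (norm_kleinCoord_lt_one hx) (norm_kleinCoord_lt_one hy)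
  have hscale : lorentzForm x x * lorentzForm y y =
      (x 0 * y 0) ^ 2 * ((1 - ‖kleinCoord x‖ ^ 2) * (1 - ‖kleinCoord y‖ ^ 2)) := by
    rw [lorentzForm_self_eq hx0, lorentzForm_self_eq hy0]
    ring
  rw [hypDist, kleinDist, hscale, lorentzForm_eq_mul_one_sub_inner_kleinCoord hx0 hy0,
    Real.sqrt_mul (sq_nonneg _), Real.sqrt_sq_eq_abs, abs_mul, abs_neg, abs_of_pos hxy,
    mul_div_mul_left _ _ (abs_pos.mpr (mul_ne_zero hx0 hy0)).ne']

end Hyperboloid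

end HyperbolicEmbedding

open HyperbolicEmbedding

theorem hyperbolic_finite_subset_embeds_in_sphere_general {E : Type*}
    [NormedAddCommGroup E] [InnerProductSpace ℝ E] {ι : Type*} [Fintype ι] {v : ι → E}
    (hv : ∀ i, ‖v i‖ < 1) :
    ∃ (f : ι → EuclideanSpace ℝ ι) (c : EuclideanSpace ℝ ι) (r : ℝ),
      (∀ i j, dist (f i) (f j) = √(kleinDist (v i) (v j))) ∧ ∀ i, dist (f i) c = r := by
  obtain ⟨C, hC⟩ := exists_posSemidef_const_sub_kleinDist hv
  obtain ⟨f, hdist, hnorm⟩ :=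
    exists_dist_eq_sqrt_of_posSemidef_const_sub
      (D := fun i j => kleinDist (v i) (v j)) (fun i => kleinDist_self (hv i)) hC
  exact ⟨f, 0, √(C / 2), hdist, fun i => (dist_zero_right _).trans (hnorm i)⟩

/-- Any finite subset `{x₁,…,xₘ}` of real hyperbolic space `H^n_ℝ`, equipped with
the metric `√d` (square root of geodesic distance), embeds isometrically into a
Euclidean sphere in `ℝ^p` for some `p`. -/
theorem hyperbolic_finite_subset_embeds_in_sphere (n : ℕ) (hn : 2 ≤ n)
    (m : ℕ) (x : Fin m → (Fin (n + 1) → ℝ))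
    (hx : ∀ i, lorentzForm (x i) (x i) < 0) :
    ∃ (p : ℕ) (f : Fin m → EuclideanSpace ℝ (Fin p))
      (c : EuclideanSpace ℝ (Fin p)) (r : ℝ),
      (∀ i j, dist (f i) (f j) = Real.sqrt (hypDist (x i) (x j))) ∧
      (∀ i, dist (f i) c = r) := by
  simp only [hypDist_eq_kleinDist (hx _) (hx _)]
  exact ⟨m, hyperbolic_finite_subset_embeds_in_sphere_general
    fun i => norm_kleinCoord_lt_one (hx i)⟩
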